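/- Let L be a Lie algebra over k. If L contains a Lie subalgebra L' that is either infinite dimensional and abelian, or isomorphic as a Lie algebra to the positive Witt algebra W₊, then U(L) is not noetherian (neither left nor right). -/

import Mathlib

/-!
Statement 14: If a Lie algebra L over a field k of characteristic 0 contains a Lie
subalgebra L' that is either infinite dimensional and abelian, or isomorphic (as a Lie
algebra) to the positive Witt algebra W₊, then U(L) is neither left nor right noetherian.
-/

noncomputable section

open Polynomial

/-- The derivation `e n = x^(n+1) d/dx` of `k[x]`. -/
def wittGen (k : Type*) [Field k] (n : ℕ) : Derivation k k[X] k[X] :=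
  (X : k[X]) ^ (n + 1) • Polynomial.derivative'

/-- The positive Witt algebra `W₊`. -/
def positiveWitt (k : Type*) [Field k] : LieSubalgebra k (Derivation k k[X] k[X]) :=
  LieSubalgebra.lieSpan k _ {d | ∃ n : ℕ, 1 ≤ n ∧ d = wittGen k n}

/-!
For a Lie subalgebra `M ⊆ L` and a left ideal `J` of `U(M)`, inducing `U(M) ⧸ J` to `L` produces a
module generated by an element whose annihilator meets `U(M)` in `J`. Hence `J` is recovered from
its extension to `U(L)`, and `U(M)` is noetherian if `U(L)` is. The induced module is built by hand,
on the polynomials in a basis of a complement of `M`, so that no Poincaré-Birkhoff-Witt theorem is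
needed. The antipode exchanges left and right ideals.

For the two subalgebras, a 1-cocycle `δ` with values in an `M`-module `V` makes `M` act on `V × k`
by `x (v, c) = (x v + c δ(x), 0)`. If infinitely many elements of `U(M)` act by `v ↦ ξ(v) w` with a
common nonzero functional `ξ` and linearly independent vectors `w`, the right ideal they generate
is not finitely generated. For `M` abelian the identity cocycle provides such elements. For `W₊` one
takes the divergence cocycle `f d/dx ↦ f'` and the elements
`e₁ e_(m+3) - 2 e₂ e_(m+2) + e₃ e_(m+1)`, which send `(v, c)` to `(2 c x^(m+4), 0)`; in
characteristic 2 the `e_n` with `n` odd span an infinite dimensional abelian subalgebra instead.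
-/

section Curvature

variable {k L E : Type*} [CommRing k] [LieRing L] [LieAlgebra k L] [LieRing E] [LieAlgebra k E]

/-- The curvature `⁅A x, A y⁆ - A ⁅x, y⁆` of a linear map `A` between Lie algebras; it vanishes
exactly when `A` is a morphism of Lie algebras. -/
def curvature (A : L →ₗ[k] E) : L →ₗ[k] L →ₗ[k] E :=
  LinearMap.mk₂ k (fun x y => ⁅A x, A y⁆ - A ⁅x, y⁆)
    (fun x x' y => by simp only [map_add, add_lie]; abel)
    (fun c x y => by simp only [map_smul, smul_lie, smul_sub])
    (fun x y y' => by simp only [map_add, lie_add]; abel)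
    (fun c x y => by simp only [map_smul, lie_smul, smul_sub])

theorem curvature_apply (A : L →ₗ[k] E) (x y : L) : curvature A x y = ⁅A x, A y⁆ - A ⁅x, y⁆ :=
  rfl

theorem curvature_self (A : L →ₗ[k] E) (x : L) : curvature A x x = 0 := by
  simp [curvature_apply]

theorem curvature_swap (A : L →ₗ[k] E) (x y : L) : curvature A y x = -curvature A x y := by
  rw [curvature_apply, curvature_apply, ← lie_skew (A x), ← lie_skew x, map_neg]
  abel

theorem curvature_bianchi (A : L →ₗ[k] E) (x y z : L) :
    ⁅A x, curvature A y z⁆ + ⁅A y, curvature A z x⁆ + ⁅A z, curvature A x y⁆ +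
      (curvature A x ⁅y, z⁆ + curvature A y ⁅z, x⁆ + curvature A z ⁅x, y⁆) = 0 := by
  have jacobi_L : A ⁅x, ⁅y, z⁆⁆ + A ⁅y, ⁅z, x⁆⁆ + A ⁅z, ⁅x, y⁆⁆ = 0 := by
    rw [← map_add, ← map_add, lie_jacobi, map_zero]
  rw [← sub_eq_zero.2 ((lie_jacobi (A x) (A y) (A z)).trans jacobi_L.symm)]
  simp only [curvature_apply, lie_sub]
  abel

end Curvature

section

attribute [local instance] LieRing.ofAssociativeRing

/-- A basis, indexed by `I`, of a complement of the image of an injective Lie algebra morphism `f`,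
encoded as the resulting coordinates on the whole Lie algebra. -/
structure ComplementBasis {k M L : Type*} [CommRing k] [LieRing M] [LieAlgebra k M] [LieRing L]
    [LieAlgebra k L] (f : M →ₗ⁅k⁆ L) (I : Type*) where
  /-- The coordinates of an element: its preimage under `f` and its complementary coordinates. -/
  equiv : L ≃ₗ[k] M × (I →₀ k)
  equiv_map (x : M) : equiv (f x) = (x, 0)

namespace ComplementBasis

open Finsupp

theorem exists_of_injective {k M L : Type*} [Field k] [LieRing M] [LieAlgebra k M] [LieRing L]
    [LieAlgebra k L] {f : M →ₗ⁅k⁆ L} (hf : Function.Injective f) :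
    ∃ (C : Submodule k L) (I : Set C), Nonempty (ComplementBasis f I) := by
  obtain ⟨C, hC⟩ := (LinearMap.range (f : M →ₗ[k] L)).exists_isCompl
  let e : (M × (Module.Basis.ofVectorSpaceIndex k C →₀ k)) ≃ₗ[k] L :=
    (LinearEquiv.ofInjective (f : M →ₗ[k] L) hf).prodCongr
      (Module.Basis.ofVectorSpace k C).repr.symm ≪≫ₗ Submodule.prodEquivOfIsCompl _ C hC
  exact ⟨C, _, ⟨e.symm, fun x => e.symm_apply_eq.2 (by simp [e])⟩⟩

variable {k M L N I : Type*} [CommRing k] [LieRing M] [LieAlgebra k M] [LieRing L]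
  [LieAlgebra k L] {f : M →ₗ⁅k⁆ L} [AddCommGroup N] [Module k N]

section Coordinates

variable (B : ComplementBasis f I)

/-- The projection onto the source of `f` along the complement. -/
def proj : L →ₗ[k] M := LinearMap.fst k M (I →₀ k) ∘ₗ B.equiv

/-- The coordinates of the component in the complement. -/
def coord : L →ₗ[k] I →₀ k := LinearMap.snd k M (I →₀ k) ∘ₗ B.equiv

/-- The basis vectors of the complement. -/
def vec (i : I) : L := B.equiv.symm (0, single i 1)

@[simp] theorem proj_map (x : M) : B.proj (f x) = x := by simp [proj, B.equiv_map]

@[simp] theorem proj_vec (i : I) : B.proj (B.vec i) = 0 := by simp [proj, vec]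

@[simp] theorem coord_map (x : M) : B.coord (f x) = 0 := by simp [coord, B.equiv_map]

@[simp] theorem coord_vec (i : I) : B.coord (B.vec i) = single i 1 := by simp [coord, vec]

theorem linearMap_ext {V : Type*} [AddCommGroup V] [Module k V] {g h : L →ₗ[k] V}
    (h_map : ∀ x, g (f x) = h (f x)) (h_vec : ∀ i, g (B.vec i) = h (B.vec i)) : g = h := by
  have symm_inl (x : M) : B.equiv.symm (x, 0) = f x := B.equiv.symm_apply_eq.2 (B.equiv_map x).symm
  rw [← LinearMap.cancel_right B.equiv.symm.surjective]
  ext x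
  · simpa [symm_inl] using h_map x
  · exact h_vec x

end Coordinates

theorem supported_le_of_single_mem {α : Type*} {s : Set α} {W : Submodule k (α →₀ N)}
    (h : ∀ a ∈ s, ∀ n, single a n ∈ W) : supported N k s ≤ W := fun v hv => by
  rw [← sum_single v]
  exact W.sum_mem fun a ha => h a (hv ha) _

section Lead

variable (N) (B : ComplementBasis f I)

/-- The leading part of the action on the induced module: multiplication by the component in the
complement. Here `Multiset I →₀ N` is the space of polynomials in the `B.vec i` with coefficients
in `N`, a multiset being the ordered monomial in its elements. -/
def lead : L →ₗ[k] Module.End k (Multiset I →₀ N) :=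
  linearCombination k (fun i => lmapDomain N k (i ::ₘ ·)) ∘ₗ B.coord

theorem lead_map (x : M) : B.lead N (f x) = 0 := by simp [lead]

theorem lead_vec (i : I) : B.lead N (B.vec i) = lmapDomain N k (i ::ₘ ·) := by simp [lead]

variable {N}

theorem lead_apply (x : L) (v : Multiset I →₀ N) :
    B.lead N x v = (B.coord x).sum fun i c => c • mapDomain (i ::ₘ ·) v := by
  simp [lead, linearCombination_apply, Finsupp.sum]

theorem lead_vec_single (i : I) (T : Multiset I) (n : N) :
    B.lead N (B.vec i) (single T n) = single (i ::ₘ T) n := by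
  simp [lead_vec]

theorem lead_lead_vec (x : L) (i : I) (v : Multiset I →₀ N) :
    B.lead N x (B.lead N (B.vec i) v) = B.lead N (B.vec i) (B.lead N x v) := by
  simp only [lead_vec, lead_apply, map_finsuppSum, map_smul, lmapDomain_apply, ← mapDomain_comp,
    Function.comp_def, Multiset.cons_swap i]

theorem lead_mem_supported {s t : Set (Multiset I)} {x : L}
    (h : ∀ i ∈ (B.coord x).support, ∀ T ∈ s, i ::ₘ T ∈ t) {v : Multiset I →₀ N}
    (hv : v ∈ supported N k s) : B.lead N x v ∈ supported N k t := by
  rw [lead_apply]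
  refine Submodule.sum_mem _ fun i hi => Submodule.smul_mem _ _ ?_
  suffices supported N k s ≤ (supported N k t).comap (lmapDomain N k (i ::ₘ ·)) from this hv
  exact supported_le_of_single_mem fun T hT n => by
    simpa using single_mem_supported k n (h i hi T hT)

end Lead

section Degree

variable (k N I) in
/-- The polynomials of degree at most `d`. -/
def degLE (d : ℕ) : Submodule k (Multiset I →₀ N) := supported N k {T | T.card ≤ d}

theorem single_mem_degLE {d : ℕ} {T : Multiset I} (h : T.card ≤ d) (n : N) :
    single T n ∈ degLE k N I d :=
  single_mem_supported k n h

theorem degLE_mono {d e : ℕ} (h : d ≤ e) : degLE k N I d ≤ degLE k N I e :=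
  supported_mono fun _ hT => le_trans hT h

theorem lead_mem_degLE (B : ComplementBasis f I) {d : ℕ} {v : Multiset I →₀ N}
    (hv : v ∈ degLE k N I d) (x : L) : B.lead N x v ∈ degLE k N I (d + 1) :=
  B.lead_mem_supported (fun i _ T hT => by simpa using hT) hv

end Degree

section LinearOrder

variable [LinearOrder I]

variable (k N) in
/-- The polynomials in the variables `B.vec i` with `j ≤ i`. -/
def varsGE (j : I) : Submodule k (Multiset I →₀ N) := supported N k {T | ∀ i ∈ T, j ≤ i}

theorem single_mem_varsGE {j : I} {T : Multiset I} (h : ∀ i ∈ T, j ≤ i) (n : N) :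
    single T n ∈ varsGE k N j :=
  single_mem_supported k n h

theorem multiset_eq_zero_or_exists_cons (T : Multiset I) :
    T = 0 ∨ ∃ j T', T = j ::ₘ T' ∧ ∀ i ∈ T', j ≤ i := by
  have sorted := T.pairwise_sort (· ≤ ·)
  rw [← T.sort_eq (· ≤ ·)]
  cases h : T.sort (· ≤ ·) with
  | nil => exact Or.inl rfl
  | cons j l => exact Or.inr ⟨j, l, rfl, fun i hi => List.rel_of_pairwise_cons (h ▸ sorted) hi⟩

variable (B : ComplementBasis f I)

/-- The projection that kills the `B.vec i` with `i ≤ j` and fixes the other `B.vec i` and the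
image of `f`. -/
def above (j : I) : L →ₗ[k] L where
  toFun x := B.equiv.symm (B.proj x, (B.coord x).filter (j < ·))
  map_add' x y := by
    rw [← map_add, map_add, map_add, filter_add, Prod.mk_add_mk]
  map_smul' c x := by
    rw [RingHom.id_apply, ← map_smul, map_smul, map_smul, filter_smul, Prod.smul_mk]

theorem above_apply (j : I) (x : L) :
    B.above j x = B.equiv.symm (B.proj x, (B.coord x).filter (j < ·)) :=
  rfl

theorem coord_above (j : I) (x : L) : B.coord (B.above j x) = (B.coord x).filter (j < ·) := by
  simp [above_apply, coord]

theorem above_map (j : I) (x : M) : B.above j (f x) = f x := by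
  rw [above_apply, proj_map, coord_map, filter_zero, LinearEquiv.symm_apply_eq, equiv_map]

theorem above_vec_of_le {i j : I} (h : i ≤ j) : B.above j (B.vec i) = 0 := by
  simp [above_apply, h.not_gt]

theorem above_vec_of_lt {i j : I} (h : j < i) : B.above j (B.vec i) = B.vec i := by
  rw [above_apply, proj_vec, coord_vec, filter_single_of_pos _ h, vec]

theorem above_above_of_le {i j : I} (h : i ≤ j) (x : L) :
    B.above i (B.above j x) = B.above j x := by
  suffices B.above i ∘ₗ B.above j = B.above j from LinearMap.congr_fun this x
  refine B.linearMap_ext (fun y => by simp only [LinearMap.comp_apply, above_map]) fun l => ?_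
  rw [LinearMap.comp_apply]
  rcases le_or_gt l j with hl | hl
  · rw [B.above_vec_of_le hl, map_zero]
  · rw [B.above_vec_of_lt hl, B.above_vec_of_lt (h.trans_lt hl)]

theorem lead_above_mem_varsGE {j : I} {v : Multiset I →₀ N} (hv : v ∈ varsGE k N j) (x : L) :
    B.lead N (B.above j x) v ∈ varsGE k N j := by
  refine B.lead_mem_supported (fun i hi T hT => ?_) hv
  rw [coord_above, support_filter, Finset.mem_filter] at hi
  exact Multiset.forall_mem_cons.2 ⟨hi.2.le, hT⟩

variable (ρ : M →ₗ[k] Module.End k N)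

/-- The lower order part of the action on the monomial `T`, computed from an action `A` that is
already correct in smaller degree. For `T = j ::ₘ T'` with `j` minimal it is forced by
`x * y_j = y_j * x + ⁅x, y_j⁆`, where the leading part of `x` on `T'` has been removed since
`y_j` acts on it by multiplication. -/
def lower (A : L →ₗ[k] Module.End k (Multiset I →₀ N)) (T : Multiset I) :
    L →ₗ[k] N →ₗ[k] (Multiset I →₀ N) :=
  match T.sort (· ≤ ·) with
  | [] => (lsingle 0).compRight k ∘ₗ ρ ∘ₗ B.proj
  | j :: T' => LinearMap.lcomp k _ (lsingle (T' : Multiset I)) ∘ₗ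
      (LinearMap.mulLeft k (A (B.vec j)) ∘ₗ (A - B.lead N) - A ∘ₗ LieAlgebra.ad k L (B.vec j)) ∘ₗ
      B.above j

theorem lower_zero (A : L →ₗ[k] Module.End k (Multiset I →₀ N)) (x : L) (n : N) :
    B.lower ρ A 0 x n = single 0 (ρ (B.proj x) n) := by
  simp [lower]

theorem lower_cons (A : L →ₗ[k] Module.End k (Multiset I →₀ N)) {j : I} {T : Multiset I}
    (h : ∀ i ∈ T, j ≤ i) (x : L) (n : N) :
    B.lower ρ A (j ::ₘ T) x n =
      A (B.vec j) ((A - B.lead N) (B.above j x) (single T n)) +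
        A ⁅B.above j x, B.vec j⁆ (single T n) := by
  rw [lower, Multiset.sort_cons _ _ _ h, ← lie_skew (B.above j x)]
  simp [sub_eq_add_neg, -lie_skew]

/-- Approximations of the action: `approx ρ m` is correct in degrees less than `m`. -/
def approx : ℕ → L →ₗ[k] Module.End k (Multiset I →₀ N)
  | 0 => 0
  | m + 1 => B.lead N + (lsum k fun T => (B.lower ρ (approx m) T).flip).flip

theorem approx_succ_single (m : ℕ) (x : L) (T : Multiset I) (n : N) :
    B.approx ρ (m + 1) x (single T n) =
      B.lead N x (single T n) + B.lower ρ (B.approx ρ m) T x n := by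
  simp [approx]

theorem approx_sub_lead_mem {m d : ℕ} (hd : d < m) {v : Multiset I →₀ N}
    (hv : v ∈ degLE k N I d) (x : L) : (B.approx ρ m - B.lead N) x v ∈ degLE k N I d := by
  induction m generalizing d v x with
  | zero => omega
  | succ m ih =>
    suffices degLE k N I d ≤ (degLE k N I d).comap ((B.approx ρ (m + 1) - B.lead N) x) from this hv
    refine supported_le_of_single_mem fun T (hT : T.card ≤ d) n => ?_
    rw [Submodule.mem_comap, LinearMap.sub_apply, LinearMap.sub_apply, approx_succ_single,
      add_sub_cancel_left]
    obtain rfl | ⟨j, T, rfl, hj⟩ := multiset_eq_zero_or_exists_cons T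
    · rw [lower_zero]
      exact single_mem_degLE (by simp) _
    · rw [Multiset.card_cons] at hT
      have approx_mem {w : Multiset I →₀ N} (hw : w ∈ degLE k N I T.card) (z : L) :
          B.approx ρ m z w ∈ degLE k N I d := by
        have sub_mem := degLE_mono (Nat.le_of_succ_le hT) (ih (by omega) hw z)
        simpa using add_mem sub_mem (degLE_mono hT (lead_mem_degLE B hw z))
      have hT_mem := single_mem_degLE (k := k) (T := T) le_rfl n
      rw [B.lower_cons ρ _ hj]
      exact add_mem (approx_mem (ih (by omega) hT_mem _) _) (approx_mem hT_mem _)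

theorem approx_succ_eq {m d : ℕ} (hd : d < m) {v : Multiset I →₀ N}
    (hv : v ∈ degLE k N I d) (x : L) : B.approx ρ (m + 1) x v = B.approx ρ m x v := by
  induction m generalizing d v x with
  | zero => omega
  | succ m ih =>
    suffices degLE k N I d ≤ LinearMap.eqLocus (B.approx ρ (m + 1 + 1) x)
      (B.approx ρ (m + 1) x) from this hv
    refine supported_le_of_single_mem fun T (hT : T.card ≤ d) n => ?_
    rw [LinearMap.mem_eqLocus, approx_succ_single, approx_succ_single]
    obtain rfl | ⟨j, T, rfl, hj⟩ := multiset_eq_zero_or_exists_cons T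
    · rw [lower_zero, lower_zero]
    · rw [Multiset.card_cons] at hT
      have hTm : T.card < m := by omega
      have hT_mem := single_mem_degLE (k := k) (T := T) le_rfl n
      have sub_eq (z : L) : (B.approx ρ (m + 1) - B.lead N) z (single T n) =
          (B.approx ρ m - B.lead N) z (single T n) := by
        simp only [LinearMap.sub_apply, ih hTm hT_mem]
      rw [B.lower_cons ρ _ hj, B.lower_cons ρ _ hj, sub_eq, ih hTm hT_mem,
        ih hTm (B.approx_sub_lead_mem ρ hTm hT_mem _)]

theorem approx_eq_of_le {m m' d : ℕ} (hd : d < m) (hm : m ≤ m') {v : Multiset I →₀ N}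
    (hv : v ∈ degLE k N I d) (x : L) : B.approx ρ m' x v = B.approx ρ m x v := by
  induction m', hm using Nat.le_induction with
  | base => rfl
  | succ e he ih => rw [B.approx_succ_eq ρ (hd.trans_le he) hv, ih]

/-- The action of `L` on the module induced from the action `ρ` of `M`, in terms of the ordered
monomials in the `B.vec i`. -/
def act : L →ₗ[k] Module.End k (Multiset I →₀ N) :=
  (lsum k fun T => (B.approx ρ (T.card + 1)).flip ∘ₗ lsingle T).flip

theorem act_eq_approx {m d : ℕ} (hd : d < m) {v : Multiset I →₀ N} (hv : v ∈ degLE k N I d)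
    (x : L) : B.act ρ x v = B.approx ρ m x v := by
  suffices degLE k N I d ≤ LinearMap.eqLocus (B.act ρ x) (B.approx ρ m x) from this hv
  refine supported_le_of_single_mem fun T (hT : T.card ≤ d) n => ?_
  have act_single : B.act ρ x (single T n) = B.approx ρ (T.card + 1) x (single T n) := by
    simp [act]
  rw [LinearMap.mem_eqLocus, act_single]
  exact (B.approx_eq_of_le ρ T.card.lt_succ_self (by omega) (single_mem_degLE le_rfl n) x).symm

theorem act_sub_lead_mem {d : ℕ} {v : Multiset I →₀ N} (hv : v ∈ degLE k N I d) (x : L) :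
    (B.act ρ - B.lead N) x v ∈ degLE k N I d := by
  rw [LinearMap.sub_apply, LinearMap.sub_apply, B.act_eq_approx ρ d.lt_succ_self hv]
  exact B.approx_sub_lead_mem ρ d.lt_succ_self hv x

theorem act_single_zero (x : L) (n : N) :
    B.act ρ x (single 0 n) = B.lead N x (single 0 n) + single 0 (ρ (B.proj x) n) := by
  rw [B.act_eq_approx ρ Nat.zero_lt_one (single_mem_degLE (T := 0) le_rfl n), approx_succ_single,
    lower_zero]

theorem act_map_single_zero (x : M) (n : N) :
    B.act ρ (f x) (single 0 n) = single 0 (ρ x n) := by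
  rw [act_single_zero, lead_map, proj_map, LinearMap.zero_apply, zero_add]

theorem act_single_cons {j : I} {T : Multiset I} (h : ∀ i ∈ T, j ≤ i) (x : L) (n : N) :
    B.act ρ x (single (j ::ₘ T) n) = B.lead N x (single (j ::ₘ T) n) +
      (B.act ρ (B.vec j) ((B.act ρ - B.lead N) (B.above j x) (single T n)) +
        B.act ρ ⁅B.above j x, B.vec j⁆ (single T n)) := by
  have hlt : T.card < (j ::ₘ T).card := by simp
  have hT_mem := single_mem_degLE (k := k) (T := T) le_rfl n
  rw [B.act_eq_approx ρ hlt (B.act_sub_lead_mem ρ hT_mem _), LinearMap.sub_apply,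
    LinearMap.sub_apply, B.act_eq_approx ρ hlt hT_mem, B.act_eq_approx ρ hlt hT_mem,
    B.act_eq_approx ρ (Nat.lt_succ_self _) (single_mem_degLE le_rfl n), approx_succ_single,
    B.lower_cons ρ _ h]
  rfl

theorem act_vec {j : I} {v : Multiset I →₀ N} (hv : v ∈ varsGE k N j) :
    B.act ρ (B.vec j) v = B.lead N (B.vec j) v := by
  suffices varsGE k N j ≤ LinearMap.eqLocus (B.act ρ (B.vec j)) (B.lead N (B.vec j)) from this hv
  refine supported_le_of_single_mem fun T hT n => ?_
  rw [LinearMap.mem_eqLocus]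
  obtain rfl | ⟨l, T, rfl, hl⟩ := multiset_eq_zero_or_exists_cons T
  · simp [act_single_zero]
  · simp [B.act_single_cons ρ hl, B.above_vec_of_le (hT l (T.mem_cons_self l))]

theorem act_above_lead_vec (j : I) (x : L) {v : Multiset I →₀ N} (hv : v ∈ varsGE k N j) :
    B.act ρ (B.above j x) (B.lead N (B.vec j) v) =
      B.act ρ (B.vec j) (B.act ρ (B.above j x) v) + B.act ρ ⁅B.above j x, B.vec j⁆ v := by
  suffices varsGE k N j ≤ LinearMap.eqLocus (B.act ρ (B.above j x) * B.lead N (B.vec j))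
    (B.act ρ (B.vec j) * B.act ρ (B.above j x) + B.act ρ ⁅B.above j x, B.vec j⁆) from this hv
  refine supported_le_of_single_mem fun T hT n => ?_
  have hT_mem := single_mem_varsGE (k := k) hT n
  simp only [LinearMap.mem_eqLocus, Module.End.mul_apply, LinearMap.add_apply, lead_vec_single,
    B.act_single_cons ρ hT, B.above_above_of_le le_rfl, LinearMap.sub_apply, map_sub,
    B.act_vec ρ (B.lead_above_mem_varsGE hT_mem x), ← lead_lead_vec]
  abel

theorem curvature_above_vec (j : I) (x : L) {v : Multiset I →₀ N} (hv : v ∈ varsGE k N j) :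
    curvature (B.act ρ) (B.above j x) (B.vec j) v = 0 := by
  rw [curvature_apply, LieRing.of_associative_ring_bracket, LinearMap.sub_apply,
    LinearMap.sub_apply, Module.End.mul_apply, Module.End.mul_apply, B.act_vec ρ hv,
    B.act_above_lead_vec ρ j x hv]
  abel

-- Since `B.vec l` maps `T` to `l ::ₘ T`, the Bianchi identity with `B.vec l` as an argument
-- expresses this curvature through curvatures on `T` and curvatures involving `B.vec l`.
theorem curvature_above_above {l : I} {T : Multiset I} (hl : ∀ i ∈ T, l ≤ i)
    (ih : ∀ v ∈ degLE k N I T.card, ∀ x z, curvature (B.act ρ) x z v = 0) (x z : L) (n : N) :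
    curvature (B.act ρ) (B.above l x) (B.above l z) (single (l ::ₘ T) n) = 0 := by
  have hT_deg := single_mem_degLE (k := k) (T := T) le_rfl n
  have hT_vars := single_mem_varsGE (k := k) hl n
  have curvature_vec_act (u w : L) :
      curvature (B.act ρ) (B.above l w) (B.vec l) (B.act ρ (B.above l u) (single T n)) = 0 := by
    have split := sub_add_cancel (B.act ρ (B.above l u) (single T n))
      (B.lead N (B.above l u) (single T n))
    rw [← split, map_add, B.curvature_above_vec ρ l w (B.lead_above_mem_varsGE hT_vars u),
      add_zero]
    exact ih _ (B.act_sub_lead_mem ρ hT_deg _) _ _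
  have curvature_act_vec (u w : L) :
      curvature (B.act ρ) (B.vec l) (B.above l w) (B.act ρ (B.above l u) (single T n)) = 0 := by
    rw [curvature_swap, LinearMap.neg_apply, curvature_vec_act, neg_zero]
  have bianchi := LinearMap.congr_fun
    (curvature_bianchi (B.act ρ) (B.vec l) (B.above l x) (B.above l z)) (single T n)
  simpa only [LieRing.of_associative_ring_bracket, LinearMap.add_apply, LinearMap.sub_apply,
    Module.End.mul_apply, ih _ hT_deg, curvature_vec_act, curvature_act_vec, map_zero,
    LinearMap.zero_apply, sub_zero, add_zero, zero_sub, neg_eq_zero, B.act_vec ρ hT_vars,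
    lead_vec_single] using bianchi

theorem curvature_apply_eq_zero {A : L →ₗ[k] Module.End k (Multiset I →₀ N)}
    {v : Multiset I →₀ N} (h_vec : ∀ j x, curvature A (B.above j x) (B.vec j) v = 0)
    (h_map : ∀ x z : M, curvature A (f x) (f z) v = 0) (x z : L) : curvature A x z v = 0 := by
  have h_map_vec (y : M) (j : I) : curvature A (f y) (B.vec j) v = 0 := by
    simpa only [above_map] using h_vec j (f y)
  have h_vec_vec {i j : I} (h : i < j) : curvature A (B.vec j) (B.vec i) v = 0 := by
    simpa only [B.above_vec_of_lt h] using h_vec i (B.vec j)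
  have swap_eq_zero {y w : L} (h : curvature A y w v = 0) : curvature A w y v = 0 := by
    rw [curvature_swap, LinearMap.neg_apply, h, neg_zero]
  suffices (curvature A).compr₂ (LinearMap.applyₗ v) = 0 from LinearMap.congr_fun₂ this x z
  refine B.linearMap_ext (fun y => B.linearMap_ext (h_map y) (h_map_vec y)) fun i =>
    B.linearMap_ext (fun y => swap_eq_zero (h_map_vec y i)) fun j => ?_
  rcases lt_trichotomy i j with h | rfl | h
  · exact swap_eq_zero (h_vec_vec h)
  · simp [curvature_self]
  · exact h_vec_vec h

theorem curvature_act_apply_eq_zero (ρ : M →ₗ⁅k⁆ Module.End k N) {d : ℕ} {v : Multiset I →₀ N}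
    (hv : v ∈ degLE k N I d) (x z : L) :
    curvature (B.act (ρ : M →ₗ[k] Module.End k N)) x z v = 0 := by
  induction d using Nat.strong_induction_on generalizing v x z with
  | _ d ih =>
  suffices degLE k N I d ≤
    LinearMap.ker (curvature (B.act (ρ : M →ₗ[k] Module.End k N)) x z) from this hv
  refine supported_le_of_single_mem fun T (hT : T.card ≤ d) n => ?_
  rw [LinearMap.mem_ker]
  obtain rfl | ⟨l, T, rfl, hl⟩ := multiset_eq_zero_or_exists_cons T
  · refine B.curvature_apply_eq_zero
      (fun j x => B.curvature_above_vec _ j x (single_mem_varsGE (by simp) n)) (fun x z => ?_) x z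
    rw [curvature_apply, ← f.map_lie, LinearMap.sub_apply, act_map_single_zero]
    simp [act_map_single_zero, LieRing.of_associative_ring_bracket]
  · rw [Multiset.card_cons] at hT
    have above_above_eq_zero := B.curvature_above_above (ρ : M →ₗ[k] Module.End k N) hl
      fun v hv x z => ih T.card (by omega) hv x z
    refine B.curvature_apply_eq_zero (fun j x => ?_) (fun x z => ?_) x z
    · rcases le_or_gt j l with h | h
      · refine B.curvature_above_vec _ j x (single_mem_varsGE ?_ n)
        exact Multiset.forall_mem_cons.2 ⟨h, fun i hi => h.trans (hl i hi)⟩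
      · simpa only [B.above_vec_of_lt h, B.above_above_of_le h.le] using
          above_above_eq_zero (B.above j x) (B.vec j) n
    · simpa only [above_map] using above_above_eq_zero (f x) (f z) n

/-- The representation of `L` induced from the representation `ρ` of `M`. -/
def inducedRep (ρ : M →ₗ⁅k⁆ Module.End k N) : L →ₗ⁅k⁆ Module.End k (Multiset I →₀ N) where
  __ := B.act (ρ : M →ₗ[k] Module.End k N)
  map_lie' {x y} := by
    refine lhom_ext fun T n => ?_
    have hT_mem := single_mem_degLE (k := k) (T := T) le_rfl n
    exact (sub_eq_zero.1 (B.curvature_act_apply_eq_zero ρ hT_mem x y)).symm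

theorem inducedRep_map_single_zero (ρ : M →ₗ⁅k⁆ Module.End k N) (x : M) (n : N) :
    B.inducedRep ρ (f x) (single 0 n) = single 0 (ρ x n) :=
  B.act_map_single_zero (ρ : M →ₗ[k] Module.End k N) x n

end LinearOrder

end ComplementBasis

section Enveloping

open UniversalEnvelopingAlgebra

variable {k M L : Type*} [CommRing k] [LieRing M] [LieAlgebra k M] [LieRing L] [LieAlgebra k L]

theorem enveloping_induction {P : UniversalEnvelopingAlgebra k L → Prop}
    (algebraMap : ∀ r : k, P (algebraMap k (UniversalEnvelopingAlgebra k L) r))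
    (ι : ∀ x : L, P (ι k x)) (add : ∀ a b, P a → P b → P (a + b))
    (mul : ∀ a b, P a → P b → P (a * b)) (a : UniversalEnvelopingAlgebra k L) : P a := by
  obtain ⟨t, rfl⟩ : ∃ t, mkAlgHom k L t = a := RingCon.mkₐ_surjective _ a
  induction t using TensorAlgebra.induction with
  | algebraMap r => rw [AlgHom.commutes]; exact algebraMap r
  | ι x => exact ι x
  | mul a b ha hb => rw [map_mul]; exact mul _ _ ha hb
  | add a b ha hb => rw [map_add]; exact add _ _ ha hb

/-- The morphism of enveloping algebras induced by a morphism of Lie algebras. -/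
def envelopingMap (f : M →ₗ⁅k⁆ L) :
    UniversalEnvelopingAlgebra k M →ₐ[k] UniversalEnvelopingAlgebra k L :=
  lift k ((ι k).comp f)

theorem lift_envelopingMap_apply {N V : Type*} [AddCommGroup N] [Module k N] [AddCommGroup V]
    [Module k V] {f : M →ₗ⁅k⁆ L} {ρ : M →ₗ⁅k⁆ Module.End k N} {σ : L →ₗ⁅k⁆ Module.End k V}
    {j : N →ₗ[k] V} (h : ∀ x n, σ (f x) (j n) = j (ρ x n)) (a : UniversalEnvelopingAlgebra k M)
    (n : N) : lift k σ (envelopingMap f a) (j n) = j (lift k ρ a n) := by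
  induction a using enveloping_induction generalizing n with
  | algebraMap r => simp [Algebra.algebraMap_eq_smul_one]
  | ι x =>
    rw [envelopingMap, lift_ι_apply, lift_ι_apply, LieHom.comp_apply, lift_ι_apply, h]
  | add a b ha hb => simp [ha, hb]
  | mul a b ha hb => simp [ha, hb]

/-- The antipode of the enveloping algebra. -/
def envelopingAntipode :
    UniversalEnvelopingAlgebra k L →ₐ[k] (UniversalEnvelopingAlgebra k L)ᵐᵒᵖ :=
  lift k
    { toLinearMap := (MulOpposite.opLinearEquiv k).toLinearMap ∘ₗ (-(ι k).toLinearMap)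
      map_lie' := fun {x y} => by
        simp [LieRing.of_associative_ring_bracket] }

theorem envelopingAntipode_ι (x : L) :
    envelopingAntipode (ι k x) = MulOpposite.op (-ι k x) :=
  lift_ι_apply k _ x

theorem envelopingAntipode_involutive (a : UniversalEnvelopingAlgebra k L) :
    (envelopingAntipode (envelopingAntipode a).unop).unop = a := by
  induction a using enveloping_induction with
  | algebraMap r => simp
  | ι x =>
    rw [envelopingAntipode_ι, MulOpposite.unop_op, map_neg, envelopingAntipode_ι,
      MulOpposite.unop_neg, MulOpposite.unop_op, neg_neg]
  | add a b ha hb => simp [ha, hb]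
  | mul a b ha hb => simp [ha, hb]

theorem isNoetherianRing_op_iff :
    IsNoetherianRing (UniversalEnvelopingAlgebra k L)ᵐᵒᵖ ↔
      IsNoetherianRing (UniversalEnvelopingAlgebra k L) := by
  let e : UniversalEnvelopingAlgebra k L ≃+* (UniversalEnvelopingAlgebra k L)ᵐᵒᵖ :=
    { envelopingAntipode (k := k) (L := L) with
      invFun := fun a => (envelopingAntipode a.unop).unop
      left_inv := envelopingAntipode_involutive
      right_inv := fun a =>
        MulOpposite.unop_injective (envelopingAntipode_involutive a.unop) }
  exact ⟨fun _ => isNoetherianRing_of_ringEquiv _ e.symm,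
    fun _ => isNoetherianRing_of_ringEquiv _ e⟩

end Enveloping

section InjectiveMap

open UniversalEnvelopingAlgebra

variable {k M L : Type*} [Field k] [LieRing M] [LieAlgebra k M] [LieRing L] [LieAlgebra k L]

-- An element of the preimage kills the image of `1 : U M ⧸ J` in the module induced from `U M ⧸ J`.
theorem comap_map_envelopingMap {f : M →ₗ⁅k⁆ L} (hf : Function.Injective f)
    (J : Ideal (UniversalEnvelopingAlgebra k M)) :
    (J.map (envelopingMap f)).comap (envelopingMap f) = J := by
  classical
  obtain ⟨C, I, ⟨B⟩⟩ := ComplementBasis.exists_of_injective hf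
  let _ : LinearOrder I := linearOrderOfSTO WellOrderingRel
  let mulLeft : UniversalEnvelopingAlgebra k M →ₐ[k]
      Module.End k (UniversalEnvelopingAlgebra k M ⧸ J) := Algebra.lsmul k k _
  let ρ := (lift k).symm mulLeft
  let one : Multiset I →₀ UniversalEnvelopingAlgebra k M ⧸ J :=
    Finsupp.single 0 (Submodule.Quotient.mk 1)
  have induced_one (a : UniversalEnvelopingAlgebra k M) :
      lift k (B.inducedRep ρ) (envelopingMap f a) one =
        Finsupp.single 0 (Submodule.Quotient.mk a) := by
    have lift_ρ : lift k ρ = mulLeft := (lift k).apply_symm_apply mulLeft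
    have mulLeft_one : mulLeft a (Submodule.Quotient.mk 1) = Submodule.Quotient.mk a :=
      congrArg Submodule.Quotient.mk (mul_one a)
    rw [← mulLeft_one, ← lift_ρ]
    exact lift_envelopingMap_apply (j := Finsupp.lsingle 0) (B.inducedRep_map_single_zero ρ) a _
  have map_kills_one {b : UniversalEnvelopingAlgebra k L} (hb : b ∈ J.map (envelopingMap f)) :
      lift k (B.inducedRep ρ) b one = 0 := by
    induction hb using Submodule.span_induction with
    | mem b hb =>
      obtain ⟨a, ha, rfl⟩ := hb
      rw [induced_one, (Submodule.Quotient.mk_eq_zero J).2 ha, Finsupp.single_zero]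
    | zero => simp
    | add a b _ _ ha hb => simp [ha, hb]
    | smul c a _ ha => simp [ha]
  refine le_antisymm (fun a ha => ?_) Ideal.le_comap_map
  rw [← Submodule.Quotient.mk_eq_zero, ← Finsupp.single_eq_zero (a := (0 : Multiset I)),
    ← induced_one, map_kills_one ha]

theorem isNoetherianRing_of_injective {f : M →ₗ⁅k⁆ L}
    (hf : Function.Injective f) [IsNoetherianRing (UniversalEnvelopingAlgebra k L)] :
    IsNoetherianRing (UniversalEnvelopingAlgebra k M) := by
  have map_strictMono : StrictMono
      (Ideal.map (envelopingMap f) : Ideal (UniversalEnvelopingAlgebra k M) → Ideal _) :=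
    Monotone.strictMono_of_injective (fun _ _ => Ideal.map_mono)
      (Function.LeftInverse.injective (comap_map_envelopingMap hf))
  exact isNoetherian_mk map_strictMono.wellFoundedGT

end InjectiveMap

section RankOne

-- The right ideal generated by the `q i`, evaluated at `e`, is the span of the `w i`.
theorem not_isNoetherianRing_op_of_rank_one {k A E ι : Type*} [Field k] [Ring A] [Algebra k A]
    [AddCommGroup E] [Module k E] [Infinite ι] (ρ : A →ₐ[k] Module.End k E)
    {ξ : Module.Dual k E} {e : E} (he : ξ e ≠ 0) {w : ι → E} (hw : LinearIndependent k w)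
    {q : ι → A} (hq : ∀ i v, ρ (q i) v = ξ v • w i) : ¬ IsNoetherianRing Aᵐᵒᵖ := by
  classical
  intro _
  let P (s : Set ι) : Ideal Aᵐᵒᵖ := Submodule.span _ ((MulOpposite.op ∘ q) '' s)
  have eval_mem {s : Set ι} {a : Aᵐᵒᵖ} (ha : a ∈ P s) :
      ρ a.unop e ∈ Submodule.span k (w '' s) := by
    induction ha using Submodule.closure_induction with
    | zero => simp
    | add a b _ _ ha hb => simpa using add_mem ha hb
    | smul_mem c a ha =>
      obtain ⟨i, hi, rfl⟩ := ha
      have eval_eq : ρ (c • (MulOpposite.op ∘ q) i).unop e = ξ (ρ c.unop e) • w i := by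
        simp [hq]
      exact eval_eq ▸ Submodule.smul_mem _ _ (Submodule.subset_span (Set.mem_image_of_mem w hi))
  obtain ⟨s, hs⟩ : ∃ s : Finset ι, P Set.univ = P s := by
    obtain ⟨t, ht, hPt⟩ := (Submodule.fg_span_iff_fg_span_finset_subset _).1
      (IsNoetherian.noetherian (P Set.univ))
    obtain ⟨s, -, rfl⟩ := Finset.subset_set_image_iff.1 ht
    exact ⟨s, by simpa [P] using hPt⟩
  obtain ⟨i, hi⟩ := Infinite.exists_notMem_finset s
  have q_mem : MulOpposite.op (q i) ∈ P s :=
    hs ▸ Submodule.subset_span (Set.mem_image_of_mem _ (Set.mem_univ i))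
  have smul_w_mem : ξ e • w i ∈ Submodule.span k (w '' s) := hq i e ▸ eval_mem q_mem
  exact hw.notMem_span_image (by simpa using hi) ((Submodule.smul_mem_iff _ he).1 smul_w_mem)

end RankOne

section Cocycle

variable {k L V : Type*} [CommRing k] [LieRing L] [LieAlgebra k L] [AddCommGroup V] [Module k V]
  [LieRingModule L V] [LieModule k L V]

/-- The extension of the trivial one-dimensional module by `V` given by a 1-cocycle `δ`, that is, a
derivation of `L` with values in `V`. -/
def cocycleRep (δ : LieDerivation k L V) : L →ₗ⁅k⁆ Module.End k (V × k) where
  toFun x := LinearMap.inl k V k ∘ₗ (LieModule.toEnd k L V x).coprod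
    (LinearMap.toSpanSingleton k V (δ x))
  map_add' x y := by ext <;> simp
  map_smul' c x := by ext <;> simp
  map_lie' {x y} := by ext <;> simp [LieRing.of_associative_ring_bracket]

theorem cocycleRep_apply (δ : LieDerivation k L V) (x : L) (v : V × k) :
    cocycleRep δ x v = (⁅x, v.1⁆ + v.2 • δ x, 0) := by
  simp [cocycleRep]

end Cocycle

section Abelian

open UniversalEnvelopingAlgebra

theorem not_isNoetherianRing_enveloping_of_isLieAbelian {k L : Type*} [Field k] [LieRing L]
    [LieAlgebra k L] [IsLieAbelian L] (hL : ¬ Module.Finite k L) :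
    ¬ IsNoetherianRing (UniversalEnvelopingAlgebra k L) := by
  let b := Module.Basis.ofVectorSpace k L
  have : Infinite (Module.Basis.ofVectorSpaceIndex k L) := by
    by_contra h
    have := not_infinite_iff_finite.1 h
    exact hL (Module.Finite.of_basis b)
  let identity : LieDerivation k L L := { LinearMap.id with leibniz' := by simp [trivial_lie_zero] }
  rw [← isNoetherianRing_op_iff]
  refine not_isNoetherianRing_op_of_rank_one (lift k (cocycleRep identity))
    (ξ := LinearMap.snd k L k) (e := (0, 1)) one_ne_zero
    (b.linearIndependent.map' (LinearMap.inl k L k)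
      (LinearMap.ker_eq_bot.2 LinearMap.inl_injective)) (q := fun i => ι k (b i)) fun i v => ?_
  simp [cocycleRep_apply, identity, trivial_lie_zero]

end Abelian

section Witt

open UniversalEnvelopingAlgebra

section CommRing

variable {R : Type*} [CommRing R]

theorem linearIndependent_X_pow {g : ℕ → ℕ} (hg : Function.Injective g) :
    LinearIndependent R fun n => (X ^ g n : R[X]) := by
  simpa [Function.comp_def, coe_basisMonomials, monomial_one_right_eq_X_pow] using
    (basisMonomials R).linearIndependent.comp g hg

theorem derivation_apply_eq (D : Derivation R R[X] R[X]) (p : R[X]) :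
    D p = derivative p * D X := by
  rw [← smul_eq_mul, ← mkDerivation_apply]
  exact Derivation.congr_fun (derivation_ext (by simp)) p

variable (R)

/-- The divergence cocycle `f d/dx ↦ f'` with values in the functions `R[X]`. -/
def divergence : LieDerivation R (Derivation R R[X] R[X]) R[X] where
  toFun D := derivative (D X)
  map_add' D E := by simp
  map_smul' c D := by simp
  leibniz' D E := by
    have apply_apply (D E : Derivation R R[X] R[X]) :
        derivative (D (E X)) = D (derivative (E X)) + derivative (E X) * derivative (D X) := by
      rw [derivation_apply_eq D (E X), derivation_apply_eq D (derivative (E X)), derivative_mul]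
    simp only [LinearMap.coe_mk, AddHom.coe_mk, Derivation.commutator_apply, map_sub,
      Derivation.bracket_eq_fun, apply_apply D E, apply_apply E D]
    ring

theorem divergence_apply (D : Derivation R R[X] R[X]) : divergence R D = derivative (D X) :=
  rfl

/-- The derivations `f d/dx` with `f' = 0`. -/
def divergenceFree : LieSubalgebra R (Derivation R R[X] R[X]) where
  __ := LinearMap.ker (divergence R).toLinearMap
  lie_mem' {D E} hD hE := by
    have divergence_D : divergence R D = 0 := hD
    have divergence_E : divergence R E = 0 := hE
    change divergence R ⁅D, E⁆ = 0
    rw [LieDerivation.apply_lie_eq_sub, divergence_D, divergence_E, lie_zero, lie_zero, sub_zero]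

variable {R}

theorem lie_eq_zero_of_mem_divergenceFree {D E : Derivation R R[X] R[X]}
    (hD : D ∈ divergenceFree R) (hE : E ∈ divergenceFree R) : ⁅D, E⁆ = 0 := by
  have derivative_D : derivative (D X) = 0 := hD
  have derivative_E : derivative (E X) = 0 := hE
  refine derivation_ext ?_
  rw [Derivation.commutator_apply, derivation_apply_eq D (E X), derivation_apply_eq E (D X),
    derivative_D, derivative_E, zero_mul, zero_mul, sub_zero, Derivation.zero_apply]

end CommRing

variable {k : Type*} [Field k]

theorem wittGen_apply (n : ℕ) (p : k[X]) : wittGen k n p = X ^ (n + 1) * derivative p :=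
  rfl

theorem divergence_wittGen (n : ℕ) : divergence k (wittGen k n) = ((n : k) + 1) • X ^ n := by
  simp [divergence_apply, wittGen_apply, smul_eq_C_mul]

theorem cocycleRep_wittGen_wittGen (a b : ℕ) (v : k[X] × k) :
    cocycleRep (divergence k) (wittGen k a) (cocycleRep (divergence k) (wittGen k (b + 1)) v) =
      ((b + 2 : k) • (X ^ (a + b + 2) * derivative v.1) +
        X ^ (a + b + 3) * derivative (derivative v.1) +
        (v.2 * (b + 1) * (b + 2)) • X ^ (a + b + 1), 0) := by
  simp only [cocycleRep_apply, divergence_wittGen, Derivation.bracket_eq_fun, wittGen_apply,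
    zero_smul, add_zero, smul_eq_C_mul, derivative_add, derivative_mul, derivative_C,
    derivative_X_pow, Nat.add_sub_cancel]
  congr 1
  push_cast
  simp only [map_add, map_mul, map_natCast, map_one, map_ofNat]
  ring

/-- The generators `e_(n+1)` of the positive Witt algebra, as elements of it. -/
def positiveWittGen (k : Type*) [Field k] (n : ℕ) : positiveWitt k :=
  ⟨wittGen k (n + 1), LieSubalgebra.subset_lieSpan ⟨n + 1, by omega, rfl⟩⟩

/-- The second difference `e₁ e_(m+3) - 2 e₂ e_(m+2) + e₃ e_(m+1)`. -/
def wittSecondDifference (k : Type*) [Field k] (m : ℕ) :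
    UniversalEnvelopingAlgebra k (positiveWitt k) :=
  let e n := ι k (positiveWittGen k n)
  e 0 * e (m + 2) - (2 : k) • (e 1 * e (m + 1)) + e 2 * e m

theorem lift_wittSecondDifference_apply (m : ℕ) (v : k[X] × k) :
    lift k ((cocycleRep (divergence k)).comp (positiveWitt k).incl) (wittSecondDifference k m) v =
      (2 * v.2) • (X ^ (m + 4), 0) := by
  have lift_gen (n : ℕ) : lift k ((cocycleRep (divergence k)).comp (positiveWitt k).incl)
      (ι k (positiveWittGen k n)) = cocycleRep (divergence k) (wittGen k (n + 1)) :=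
    lift_ι_apply k _ _
  simp only [wittSecondDifference, map_add, map_sub, map_smul, map_mul, lift_gen,
    LinearMap.add_apply, LinearMap.sub_apply, LinearMap.smul_apply, Module.End.mul_apply,
    cocycleRep_wittGen_wittGen]
  refine Prod.ext ?_ (by simp)
  simp only [Prod.fst_add, Prod.fst_sub, Prod.smul_fst, smul_eq_C_mul, map_add, map_mul,
    map_natCast, map_one, map_ofNat, Nat.cast_add, Nat.cast_one, Nat.cast_ofNat]
  ring

theorem not_isNoetherianRing_enveloping_positiveWitt_of_two_ne_zero (h2 : (2 : k) ≠ 0) :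
    ¬ IsNoetherianRing (UniversalEnvelopingAlgebra k (positiveWitt k)) := by
  rw [← isNoetherianRing_op_iff]
  refine not_isNoetherianRing_op_of_rank_one
    (lift k ((cocycleRep (divergence k)).comp (positiveWitt k).incl))
    (ξ := (2 : k) • LinearMap.snd k k[X] k) (e := (0, 1)) (by simpa using h2)
    ((linearIndependent_X_pow (add_left_injective 4)).map' (LinearMap.inl k k[X] k)
      (LinearMap.ker_eq_bot.2 LinearMap.inl_injective)) lift_wittSecondDifference_apply

theorem not_isNoetherianRing_enveloping_positiveWitt_of_two_eq_zero (h2 : (2 : k) = 0) :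
    ¬ IsNoetherianRing (UniversalEnvelopingAlgebra k (positiveWitt k)) := by
  let M : LieSubalgebra k (Derivation k k[X] k[X]) := divergenceFree k ⊓ positiveWitt k
  have abelian : IsLieAbelian M := ⟨fun D E =>
    Subtype.ext (lie_eq_zero_of_mem_divergenceFree D.2.1 E.2.1)⟩
  have wittGen_mem (n : ℕ) : wittGen k (2 * n + 1) ∈ M := by
    refine ⟨?_, LieSubalgebra.subset_lieSpan ⟨2 * n + 1, by omega, rfl⟩⟩
    change divergence k (wittGen k (2 * n + 1)) = 0
    have coeff_eq_zero : ((2 * n + 1 : ℕ) : k) + 1 = 0 := by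
      push_cast
      linear_combination ((n : k) + 1) * h2
    rw [divergence_wittGen, coeff_eq_zero, zero_smul]
  have not_finite : ¬ Module.Finite k M := fun _ => by
    let evalX : M →ₗ[k] k[X] :=
      { toFun D := D.1 X, map_add' _ _ := rfl, map_smul' _ _ := rfl }
    have linearIndependent_wittGen : LinearIndependent k fun n => (⟨_, wittGen_mem n⟩ : M) := by
      refine .of_comp evalX ?_
      have injective_exponent : Function.Injective fun n => 2 * n + 2 := fun m n h => by grind
      simpa [Function.comp_def, evalX, wittGen_apply] using
        linearIndependent_X_pow injective_exponent
    exact Module.Finite.not_linearIndependent_of_infinite _ linearIndependent_wittGen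
  exact fun _ => not_isNoetherianRing_enveloping_of_isLieAbelian not_finite
    (isNoetherianRing_of_injective (LieSubalgebra.inclusion_injective inf_le_right))

theorem not_isNoetherianRing_enveloping_positiveWitt (k : Type*) [Field k] :
    ¬ IsNoetherianRing (UniversalEnvelopingAlgebra k (positiveWitt k)) := by
  by_cases h2 : (2 : k) = 0
  · exact not_isNoetherianRing_enveloping_positiveWitt_of_two_eq_zero h2
  · exact not_isNoetherianRing_enveloping_positiveWitt_of_two_ne_zero h2

end Witt

end

theorem enveloping_not_noetherian_of_subalgebra_general (k : Type*) (L : Type*) [Field k]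
    [LieRing L] [LieAlgebra k L] (L' : LieSubalgebra k L)
    (h : (¬ Module.Finite k L' ∧ IsLieAbelian L') ∨
          Nonempty (L' ≃ₗ⁅k⁆ positiveWitt k)) :
    ¬ IsNoetherianRing (UniversalEnvelopingAlgebra k L) ∧
      ¬ IsNoetherianRing (UniversalEnvelopingAlgebra k L)ᵐᵒᵖ := by
  suffices ¬ IsNoetherianRing (UniversalEnvelopingAlgebra k L) from
    ⟨this, mt isNoetherianRing_op_iff.1 this⟩
  intro _
  rcases h with ⟨not_finite, _⟩ | ⟨⟨e⟩⟩
  · exact not_isNoetherianRing_enveloping_of_isLieAbelian not_finite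
      (isNoetherianRing_of_injective (f := L'.incl) Subtype.val_injective)
  · exact not_isNoetherianRing_enveloping_positiveWitt k
      (isNoetherianRing_of_injective (f := L'.incl.comp e.symm.toLieHom)
        (Subtype.val_injective.comp e.symm.injective))

theorem enveloping_not_noetherian_of_subalgebra (k : Type*) (L : Type*) [Field k] [CharZero k]
    [LieRing L] [LieAlgebra k L] (L' : LieSubalgebra k L)
    (h : (¬ Module.Finite k L' ∧ IsLieAbelian L') ∨
          Nonempty (L' ≃ₗ⁅k⁆ positiveWitt k)) :
    ¬ IsNoetherianRing (UniversalEnvelopingAlgebra k L) ∧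
      ¬ IsNoetherianRing (UniversalEnvelopingAlgebra k L)ᵐᵒᵖ :=
  enveloping_not_noetherian_of_subalgebra_general k L L' h

end
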